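/- A cubic polynomial L(λ) = p₀λ³ + p₁λ² + p₂λ + p₃ with real coefficients and p₀ > 0 has all its roots with negative real parts if and only if p₁ > 0, p₂ > 0, p₃ > 0 and p₁p₂ > p₀p₃. -/

import Mathlib

theorem exists_real_root_cubic (a b c d : ℝ) (ha : 0 < a) :
    ∃ r : ℝ, a * r ^ 3 + b * r ^ 2 + c * r + d = 0 := by
  obtain ⟨M, hM1, hM⟩ : ∃ M : ℝ, 1 ≤ M ∧ |b| + |c| + |d| < a * M := by
    refine ⟨1 + (|b| + |c| + |d|) / a, le_add_of_nonneg_right (by positivity), ?_⟩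
    rw [mul_add, mul_div_cancel₀ _ ha.ne']
    linarith
  have hsq : M ≤ M ^ 2 := by nlinarith
  have hsq1 : 1 ≤ M ^ 2 := hM1.trans hsq
  have hcube : (|b| + |c| + |d|) * M ^ 2 < a * M ^ 3 := by
    calc _ < a * M * M ^ 2 := by gcongr
      _ = _ := by ring
  have hb := abs_le.mp (abs_mul b (M ^ 2)).le
  have hc := abs_le.mp (abs_mul c M).le
  have hd := abs_le.mp (le_refl |d|)
  rw [abs_of_nonneg (by positivity : 0 ≤ M ^ 2)] at hb
  rw [abs_of_nonneg (by positivity : 0 ≤ M)] at hc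
  have hcM : |c| * M ≤ |c| * M ^ 2 := by gcongr
  have hdM : |d| ≤ |d| * M ^ 2 := le_mul_of_one_le_right (abs_nonneg d) hsq1
  have hcont : Continuous fun x : ℝ => a * x ^ 3 + b * x ^ 2 + c * x + d := by fun_prop
  refine mem_range_of_exists_le_of_exists_ge hcont ⟨-M, ?_⟩ ⟨M, ?_⟩ <;> ring_nf at * <;> linarith

theorem Complex.re_neg_of_quadratic_eq_zero {a b c : ℝ} (ha : 0 < a) (hb : 0 < b) (hc : 0 < c)
    {z : ℂ} (hz : (a : ℂ) * z ^ 2 + b * z + c = 0) : z.re < 0 := by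
  have hre := congrArg Complex.re hz
  have him := congrArg Complex.im hz
  simp [pow_two] at hre him
  have hfactor : z.im * (2 * a * z.re + b) = 0 := by linarith
  by_contra! hx
  rcases mul_eq_zero.mp hfactor with h | h
  · rw [h] at hre
    have : 0 ≤ a * (z.re * z.re) := by positivity
    have : 0 ≤ b * z.re := by positivity
    linarith
  · have : 0 ≤ 2 * a * z.re := by positivity
    linarith

theorem Complex.coeff_pos_of_quadratic_roots_re_neg {a b c : ℝ} (ha : 0 < a)
    (h : ∀ z : ℂ, (a : ℂ) * z ^ 2 + b * z + c = 0 → z.re < 0) : 0 < b ∧ 0 < c := by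
  have ha' : (a : ℂ) ≠ 0 := by exact_mod_cast ha.ne'
  rcases le_or_gt 0 (b ^ 2 - 4 * a * c) with hD | hD
  · set s := √(b ^ 2 - 4 * a * c)
    have hs : s ^ 2 = b ^ 2 - 4 * a * c := Real.sq_sqrt hD
    have hs0 : 0 ≤ s := Real.sqrt_nonneg _
    have hroot : a * ((-b + s) / (2 * a)) ^ 2 + b * ((-b + s) / (2 * a)) + c = 0 := by
      field_simp
      linear_combination hs
    have hneg := h (((-b + s) / (2 * a) : ℝ) : ℂ) (by exact_mod_cast hroot)
    rw [Complex.ofReal_re, div_lt_iff₀ (by positivity), zero_mul] at hneg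
    have hb : 0 < b := by linarith
    exact ⟨hb, by nlinarith⟩
  · set s := √(4 * a * c - b ^ 2)
    have hs : (s : ℂ) ^ 2 = 4 * a * c - b ^ 2 := by
      exact_mod_cast Real.sq_sqrt (by linarith : 0 ≤ 4 * a * c - b ^ 2)
    have hneg := h (((-b / (2 * a) : ℝ) : ℂ) + ((s / (2 * a) : ℝ) : ℂ) * Complex.I) (by
      push_cast
      field_simp
      linear_combination (s : ℂ) ^ 2 * Complex.I_sq - hs)
    have hb : 0 < b := by
      rw [Complex.add_re, Complex.ofReal_re, Complex.re_ofReal_mul, Complex.I_re, mul_zero,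
        add_zero, div_lt_iff₀ (by positivity), zero_mul] at hneg
      linarith
    exact ⟨hb, by nlinarith⟩

/-- Routh–Hurwitz criterion for cubic polynomials: a real cubic
`p₀λ³ + p₁λ² + p₂λ + p₃` with `p₀ > 0` has all complex roots with negative
real part iff `p₁ > 0`, `p₂ > 0`, `p₃ > 0` and `p₁p₂ > p₀p₃`. -/
theorem routh_hurwitz_cubic (p0 p1 p2 p3 : ℝ) (hp0 : 0 < p0) :
    (∀ z : ℂ, (p0 : ℂ) * z ^ 3 + (p1 : ℂ) * z ^ 2 + (p2 : ℂ) * z + (p3 : ℂ) = 0 →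
      z.re < 0) ↔ (0 < p1 ∧ 0 < p2 ∧ 0 < p3 ∧ p0 * p3 < p1 * p2) := by
  obtain ⟨r, hr⟩ := exists_real_root_cubic p0 p1 p2 p3 hp0
  obtain ⟨s, rfl⟩ : ∃ s, r = -s := ⟨-r, by ring⟩
  obtain ⟨b, rfl⟩ : ∃ b, p1 = b + p0 * s := ⟨p1 - p0 * s, by ring⟩
  obtain ⟨c, rfl⟩ : ∃ c, p2 = c + b * s := ⟨p2 - b * s, by ring⟩
  obtain rfl : p3 = c * s := by linear_combination hr
  have hfactor (z : ℂ) : (p0 : ℂ) * z ^ 3 + ((b + p0 * s : ℝ) : ℂ) * z ^ 2 +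
      ((c + b * s : ℝ) : ℂ) * z + ((c * s : ℝ) : ℂ) = (z + s) * (p0 * z ^ 2 + b * z + c) := by
    push_cast
    ring
  simp only [hfactor]
  constructor
  · intro h
    have hs : 0 < s := by simpa using h (-s) (by simp)
    obtain ⟨hb, hc⟩ := Complex.coeff_pos_of_quadratic_roots_re_neg hp0
      fun z hz => h z (by rw [hz, mul_zero])
    refine ⟨by positivity, by positivity, by positivity, ?_⟩
    have : 0 < b * (c + b * s + p0 * s ^ 2) := by positivity
    linarith
  · rintro ⟨h1, h2, h3, h4⟩ z hz
    have hs : 0 < s := by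
      by_contra! hs
      have hcube : 0 ≤ p0 * (-s) ^ 3 := mul_nonneg hp0.le (pow_nonneg (by linarith) 3)
      have hsq : 0 ≤ (b + p0 * s) * (-s) ^ 2 := mul_nonneg h1.le (sq_nonneg _)
      have hlin : 0 ≤ (c + b * s) * (-s) := mul_nonneg h2.le (by linarith)
      linarith
    have hc : 0 < c := pos_of_mul_pos_left h3 hs.le
    have hb : 0 < b := by
      have hpos : 0 < c + b * s + p0 * s ^ 2 := by positivity
      refine pos_of_mul_pos_left (b := c + b * s + p0 * s ^ 2) ?_ hpos.le
      linarith
    rcases mul_eq_zero.mp hz with h | h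
    · simpa [eq_neg_of_add_eq_zero_left h] using hs
    · exact Complex.re_neg_of_quadratic_eq_zero hp0 hb hc h
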